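/- arXiv:1705.03990 — 2 statements merged into one kernel-verified Lean document; each statement's English description precedes it below -/
import Mathlib

section
/- Fix ℓ ≥ 1 and ζ > 0, and let (P_k^{(ℓ)}) and (P_k^{(ℓ−1)}) be orthonormal families for ω^{(ℓ)}(·;ζ) and ω^{(ℓ−1)}(·;ζ), with positive leading coefficients c_k^{(ℓ)}, c_k^{(ℓ−1)}. Define p_k := c_k^{(ℓ−1)}/c_k^{(ℓ)}, r_k := ((2ℓ−1)/(2ℓ+1))·c_{k−1}^{(ℓ)}/c_{k+1}^{(ℓ−1)} (k ≥ 1), q_k := ∫₁^∞ P_{k+1}^{(ℓ−1)}(x)·P_k^{(ℓ)}(x)·ω^{(ℓ)}(x;ζ) dx, p̃_k := ((2ℓ−1)/(2ℓ+1))·c_k^{(ℓ)}/c_{k+1}^{(ℓ−1)}, q̃_k := σ(P_{k+1}^{(ℓ−1)}) − σ(P_k^{(ℓ)}) (where σ(P) denotes the sum of the roots of P, i.e. minus the ratio of the subleading to the leading coefficient, with σ of a constant polynomial defined to be 0), and r̃_k := p_k·(1 − ((2ℓ+1)/(2ℓ−1))·p̃_k²). Then all of p_k, q_k, r_k, p̃_k,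 q̃_k, r̃_k are strictly positive (for all indices where they are defined). -/
open MeasureTheory Polynomial

/-- `K₂(ζ) = ∫₀^∞ cosh(2t)·exp(−ζ·cosh t) dt`. -/
noncomputable def K2 (ζ : ℝ) : ℝ :=
  ∫ t in Set.Ioi (0 : ℝ), Real.cosh (2 * t) * Real.exp (-ζ * Real.cosh t)

/-- The weight `ω^{(ℓ)}(x;ζ) = ζ·(x²−1)^{ℓ+1/2}·exp(−ζx)/((2ℓ+1)·K₂(ζ))` on `[1,∞)`. -/
noncomputable def wgt (l : ℕ) (ζ : ℝ) (x : ℝ) : ℝ :=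
  ζ * (x ^ 2 - 1) ^ ((l : ℝ) + 1 / 2) * Real.exp (-ζ * x) / ((2 * (l : ℝ) + 1) * K2 ζ)

/-- An orthonormal family for the weight `ω^{(ℓ)}(·;ζ)`: real polynomials `P k` of degree
exactly `k`, positive leading coefficients, orthonormal for the weighted inner product. -/
def IsOrthoFam (l : ℕ) (ζ : ℝ) (P : ℕ → Polynomial ℝ) : Prop :=
  (∀ k : ℕ, (P k).degree = k) ∧ (∀ k : ℕ, 0 < (P k).leadingCoeff) ∧
  ∀ i k : ℕ, (∫ x in Set.Ioi (1 : ℝ), (P i).eval x * (P k).eval x * wgt l ζ x)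
      = if i = k then 1 else 0

/-- `p_k = c_k^{(ℓ−1)} / c_k^{(ℓ)}` (ratio of leading coefficients); `Q` is the family
for `ℓ−1` and `P` the family for `ℓ`. -/
noncomputable def pC (P Q : ℕ → Polynomial ℝ) (k : ℕ) : ℝ :=
  (Q k).leadingCoeff / (P k).leadingCoeff

/-- `r_k = ((2ℓ−1)/(2ℓ+1))·c_{k−1}^{(ℓ)}/c_{k+1}^{(ℓ−1)}` for `k ≥ 1`, with `r₀ = 0`. -/
noncomputable def rC (l : ℕ) (P Q : ℕ → Polynomial ℝ) (k : ℕ) : ℝ :=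
  if k = 0 then 0
  else ((2 * (l : ℝ) - 1) / (2 * (l : ℝ) + 1)) * (P (k - 1)).leadingCoeff
        / (Q (k + 1)).leadingCoeff

/-- `q_k = ∫ P_{k+1}^{(ℓ−1)}·P_k^{(ℓ)}·ω^{(ℓ)} dx`. -/
noncomputable def qC (l : ℕ) (ζ : ℝ) (P Q : ℕ → Polynomial ℝ) (k : ℕ) : ℝ :=
  ∫ x in Set.Ioi (1 : ℝ), (Q (k + 1)).eval x * (P k).eval x * wgt l ζ x

/-- `p̃_k = ((2ℓ−1)/(2ℓ+1))·c_k^{(ℓ)}/c_{k+1}^{(ℓ−1)}`. -/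
noncomputable def ptC (l : ℕ) (P Q : ℕ → Polynomial ℝ) (k : ℕ) : ℝ :=
  ((2 * (l : ℝ) - 1) / (2 * (l : ℝ) + 1)) * (P k).leadingCoeff / (Q (k + 1)).leadingCoeff

/-- `σ(P)`: the sum of the roots of `P`, i.e. minus the ratio of the subleading to the
leading coefficient; `σ` of a constant polynomial is `0`. -/
noncomputable def rootSum (P : Polynomial ℝ) : ℝ :=
  if P.natDegree = 0 then 0 else -(P.coeff (P.natDegree - 1)) / P.leadingCoeff

/-- `q̃_k = σ(P_{k+1}^{(ℓ−1)}) − σ(P_k^{(ℓ)})`. -/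
noncomputable def qtC (P Q : ℕ → Polynomial ℝ) (k : ℕ) : ℝ :=
  rootSum (Q (k + 1)) - rootSum (P k)

/-- `r̃_k = p_k·(1 − ((2ℓ+1)/(2ℓ−1))·p̃_k²)`. -/
noncomputable def rtC (l : ℕ) (P Q : ℕ → Polynomial ℝ) (k : ℕ) : ℝ :=
  pC P Q k * (1 - ((2 * (l : ℝ) + 1) / (2 * (l : ℝ) - 1)) * (ptC l P Q k) ^ 2)

lemma dsub_lt {p q : ℝ[X]} {n : ℕ} (hp : p.degree < n) (hq : q.degree < n) :
    (p - q).degree < n :=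
  lt_of_le_of_lt (degree_sub_le _ _) (max_lt hp hq)

lemma ortho_lt (M : ℝ[X] →ₗ[ℝ] ℝ) (Q : ℕ → ℝ[X]) (hd : ∀ k, (Q k).degree = k)
    (hlc : ∀ k, 0 < (Q k).leadingCoeff)
    (ho : ∀ i k, M (Q i * Q k) = if i = k then 1 else 0) (k : ℕ) :
    ∀ n : ℕ, n ≤ k → ∀ p : ℝ[X], p.degree < n → M (p * Q k) = 0 := by
  intro n
  induction n with
  | zero =>
    intro _ p hp
    have : p = 0 := by
      rw [← Polynomial.degree_eq_bot]
      simpa using hp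
    simp [this]
  | succ n ih =>
    intro hn p hp
    have hnd : (Q n).natDegree = n := natDegree_eq_of_degree_eq_some (hd n)
    have hl := hlc n
    have hcn : (Q n).coeff n = (Q n).leadingCoeff := by rw [leadingCoeff, hnd]
    set c := p.coeff n / (Q n).leadingCoeff with hc
    have h1 : (p - c • Q n).degree < n := by
      rw [degree_lt_iff_coeff_zero] at hp ⊢
      intro m hm
      rcases Nat.eq_or_lt_of_le hm with h | h
      · subst h
        rw [coeff_sub, coeff_smul, hcn, smul_eq_mul, hc]
        field_simp
        ring
      · rw [coeff_sub, coeff_smul, hp m h, coeff_eq_zero_of_natDegree_lt (by omega)]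
        simp
    have h2 := ih (by omega) _ h1
    rw [sub_mul, map_sub, smul_mul_assoc, map_smul, ho, if_neg (by omega)] at h2
    simpa using h2

lemma ortho_le (M : ℝ[X] →ₗ[ℝ] ℝ) (Q : ℕ → ℝ[X]) (hd : ∀ k, (Q k).degree = k)
    (hlc : ∀ k, 0 < (Q k).leadingCoeff)
    (ho : ∀ i k, M (Q i * Q k) = if i = k then 1 else 0) (k : ℕ)
    (p : ℝ[X]) (hp : p.degree ≤ k) : M (p * Q k) = p.coeff k / (Q k).leadingCoeff := by
  have hnd : (Q k).natDegree = k := natDegree_eq_of_degree_eq_some (hd k)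
  have hl := hlc k
  have hcn : (Q k).coeff k = (Q k).leadingCoeff := by rw [leadingCoeff, hnd]
  set c := p.coeff k / (Q k).leadingCoeff with hc
  have h1 : (p - c • Q k).degree < k := by
    rw [degree_lt_iff_coeff_zero]
    rw [degree_le_iff_coeff_zero] at hp
    intro m hm
    rcases Nat.eq_or_lt_of_le hm with h | h
    · subst h
      rw [coeff_sub, coeff_smul, hcn, smul_eq_mul, hc]
      field_simp
      ring
    · rw [coeff_sub, coeff_smul, hp m (by exact_mod_cast h),
        coeff_eq_zero_of_natDegree_lt (by omega)]
      simp
  have h2 := ortho_lt M Q hd hlc ho k k le_rfl _ h1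
  rw [sub_mul, map_sub, smul_mul_assoc, map_smul, ho, if_pos rfl] at h2
  simp only [smul_eq_mul, mul_one] at h2
  linarith

lemma ortho_zero (M : ℝ[X] →ₗ[ℝ] ℝ) (Q : ℕ → ℝ[X]) (hd : ∀ k, (Q k).degree = k)
    (hlc : ∀ k, 0 < (Q k).leadingCoeff)
    (ho : ∀ i k, M (Q i * Q k) = if i = k then 1 else 0) :
    ∀ n : ℕ, ∀ p : ℝ[X], p.degree < n → (∀ j < n, M (p * Q j) = 0) → p = 0 := by
  intro n
  induction n with
  | zero =>
    intro p hp _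
    rw [← Polynomial.degree_eq_bot]
    simpa using hp
  | succ n ih =>
    intro p hp h
    have hle : p.degree ≤ n := by
      rw [degree_lt_iff_coeff_zero] at hp
      rw [degree_le_iff_coeff_zero]
      intro m hm
      exact hp m (by exact_mod_cast hm)
    have h1 := ortho_le M Q hd hlc ho n p hle
    rw [h n (by omega)] at h1
    have hl := hlc n
    have h2 : p.coeff n = 0 := by
      rcases div_eq_zero_iff.1 h1.symm with h | h
      · exact h
      · exact absurd h hl.ne'
    refine ih p ?_ (fun j hj => h j (by omega))
    rw [degree_lt_iff_coeff_zero] at hp ⊢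
    intro m hm
    rcases Nat.eq_or_lt_of_le hm with h | h
    · exact h ▸ h2
    · exact hp m h

lemma ortho_eval_neg (M : ℝ[X] →ₗ[ℝ] ℝ)
    (hpos : ∀ p : ℝ[X], p ≠ 0 → (∀ x > 1, 0 ≤ p.eval x) → 0 < M p)
    (Q : ℕ → ℝ[X]) (hd : ∀ k, (Q k).degree = k)
    (hlc : ∀ k, 0 < (Q k).leadingCoeff)
    (ho : ∀ i k, M (Q i * Q k) = if i = k then 1 else 0) (k : ℕ) :
    (Q (k+1)).eval (-1) * (Q k).eval (-1) < 0 := by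
  have hnd : ∀ k, (Q k).natDegree = k := fun k => natDegree_eq_of_degree_eq_some (hd k)
  have hcn : ∀ k, (Q k).coeff k = (Q k).leadingCoeff := fun k => by rw [leadingCoeff, hnd]
  have hkey : ∀ R : ℝ[X], R ≠ 0 → 0 < M ((X - C (-1)) * R * R) := by
    intro R hR
    apply hpos
    · exact mul_ne_zero (mul_ne_zero (X_sub_C_ne_zero _) hR) hR
    · intro x hx
      simp only [eval_mul, eval_sub, eval_X, eval_C]
      rw [mul_assoc]
      exact mul_nonneg (by linarith) (mul_self_nonneg _)
  have hdR : ∀ p R : ℝ[X], ∀ n : ℕ, p ≠ 0 → p = (X - C (-1)) * R → p.degree = (n+1 : ℕ) →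
      R ≠ 0 ∧ R.degree = n ∧ R.coeff n = p.coeff (n+1) := by
    intro p R n hp h hdp
    have hR : R ≠ 0 := by rintro rfl; simp at h; exact hp h
    have h1 : p.natDegree = n + 1 := natDegree_eq_of_degree_eq_some hdp
    rw [h, natDegree_mul (X_sub_C_ne_zero _) hR, natDegree_X_sub_C] at h1
    have h2 : R.natDegree = n := by omega
    refine ⟨hR, by rw [degree_eq_natDegree hR, h2], ?_⟩
    rw [h, sub_mul, coeff_sub, coeff_X_mul, coeff_C_mul,
      coeff_eq_zero_of_natDegree_lt (n := n+1) (by omega)]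
    ring
  have hne : ∀ p k, p = Q k → p.eval (-1) ≠ 0 := by
    intro p k hpk h0
    subst hpk
    obtain ⟨R, hR⟩ := dvd_iff_isRoot.2 (show IsRoot (Q k) (-1) from h0)
    have hQ0 : Q k ≠ 0 := by
      intro h; have := hlc k; simp [h] at this
    rcases k with _ | k
    · have h3 := hd 0
      have hR0 : R ≠ 0 := by rintro rfl; simp at hR; exact hQ0 hR
      have := hnd 0
      rw [hR, natDegree_mul (X_sub_C_ne_zero _) hR0, natDegree_X_sub_C] at this
      omega
    · obtain ⟨hR0, hRd, -⟩ := hdR _ R k hQ0 hR (hd (k+1))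
      have h1 := hkey R hR0
      rw [← hR, mul_comm, ortho_lt M Q hd hlc ho (k+1) (k+1) le_rfl R
        (by rw [hRd]; exact_mod_cast Nat.lt_succ_self k)] at h1
      exact lt_irrefl _ h1
  have e0 := hne _ k rfl
  set t := (Q (k+1)).eval (-1) / (Q k).eval (-1) with ht
  have hroot : IsRoot (Q (k+1) - t • Q k) (-1) := by
    simp only [IsRoot, eval_sub, eval_smul, smul_eq_mul, ht]
    field_simp
    ring
  obtain ⟨R, hR⟩ := dvd_iff_isRoot.2 hroot
  have hlt : (t • Q k).degree < (Q (k+1)).degree := by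
    refine lt_of_le_of_lt (degree_smul_le _ _) ?_
    rw [hd, hd]; exact_mod_cast Nat.lt_succ_self k
  have hdS : (Q (k+1) - t • Q k).degree = (k+1 : ℕ) := by
    rw [degree_sub_eq_left_of_degree_lt hlt, hd]
  have hS0 : Q (k+1) - t • Q k ≠ 0 := by
    intro h; rw [h, degree_zero] at hdS; exact absurd hdS (WithBot.bot_ne_coe)
  obtain ⟨hR0, hRd, hRc⟩ := hdR _ R k hS0 hR hdS
  have h1 := hkey R hR0
  rw [← hR, mul_comm, mul_sub, map_sub, mul_smul_comm, map_smul,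
    ortho_lt M Q hd hlc ho (k+1) (k+1) le_rfl R
        (by rw [hRd]; exact_mod_cast Nat.lt_succ_self k),
    ortho_le M Q hd hlc ho k R hRd.le, hRc, coeff_sub, coeff_smul, hcn,
    coeff_eq_zero_of_natDegree_lt (p := Q k) (by rw [hnd]; omega)] at h1
  simp only [smul_eq_mul, mul_zero, sub_zero, zero_sub] at h1
  have h2 : 0 < (Q (k+1)).leadingCoeff / (Q k).leadingCoeff := div_pos (hlc _) (hlc _)
  have h3 : t < 0 := by
    by_contra h; push Not at h; nlinarith [mul_nonneg h h2.le]
  have h4 : (Q (k+1)).eval (-1) = t * (Q k).eval (-1) := by rw [ht]; field_simp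
  rw [h4, mul_assoc]
  exact mul_neg_of_neg_of_pos h3 (mul_self_pos.2 e0)

lemma rootSum_aux (p : ℝ[X]) (k : ℕ) (hp : p.degree = k) :
    ((X ^ 2 - 1) * p).coeff (k+1) = - rootSum p * p.leadingCoeff := by
  have hnd : p.natDegree = k := natDegree_eq_of_degree_eq_some hp
  have hl : p.leadingCoeff ≠ 0 := by
    rw [leadingCoeff_ne_zero]; rintro rfl; simp at hp
  rw [sub_mul, one_mul, coeff_sub, coeff_eq_zero_of_natDegree_lt (p := p) (n := k+1) (by omega), sub_zero,
    rootSum, hnd]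
  rcases k with _ | k
  · rw [coeff_X_pow_mul']; simp
  · rw [if_neg (by omega), coeff_X_pow_mul p 2 k]
    simp only [Nat.add_sub_cancel]
    field_simp

lemma rootSum_aux2 (p : ℝ[X]) (k : ℕ) (hp : p.degree = (k+1 : ℕ)) :
    p.coeff k = - rootSum p * p.leadingCoeff := by
  have hnd : p.natDegree = k+1 := natDegree_eq_of_degree_eq_some hp
  have hl : p.leadingCoeff ≠ 0 := by
    rw [leadingCoeff_ne_zero]; rintro rfl; simp at hnd
  rw [rootSum, hnd, if_neg (by omega)]
  simp only [Nat.add_sub_cancel]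
  field_simp

/-- Abstract version of the main theorem. -/
lemma abstract_main (M : ℝ[X] →ₗ[ℝ] ℝ)
    (hpos : ∀ p : ℝ[X], p ≠ 0 → (∀ x > 1, 0 ≤ p.eval x) → 0 < M p)
    (P Q : ℕ → ℝ[X]) (hd : ∀ k, (Q k).degree = k)
    (hlc : ∀ k, 0 < (Q k).leadingCoeff)
    (ho : ∀ i k, M (Q i * Q k) = if i = k then 1 else 0)
    (a : ℝ) (ha : 0 < a)
    (hdP : ∀ k, (P k).degree = k) (hlcP : ∀ k, 0 < (P k).leadingCoeff)
    (hoP : ∀ i k, a * M ((X^2 - 1) * (P i * P k)) = if i = k then 1 else 0) (k : ℕ) :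
    0 < M ((X^2 - 1) * (Q (k+1) * P k)) ∧ 0 < qtC P Q k ∧
      a * (P k).leadingCoeff ^ 2 < (Q (k+1)).leadingCoeff ^ 2 := by
  have hnd : ∀ k, (Q k).natDegree = k := fun k => natDegree_eq_of_degree_eq_some (hd k)
  have hcn : ∀ k, (Q k).coeff k = (Q k).leadingCoeff := fun k => by rw [leadingCoeff, hnd]
  have hndP : ∀ k, (P k).natDegree = k := fun k => natDegree_eq_of_degree_eq_some (hdP k)
  have hcnP : ∀ k, (P k).coeff k = (P k).leadingCoeff := fun k => by rw [leadingCoeff, hndP]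
  have hP0 : P k ≠ 0 := by
    intro h; have := hlcP k; simp [h] at this
  let N : ℝ[X] →ₗ[ℝ] ℝ := a • (M ∘ₗ LinearMap.mulLeft ℝ (X^2 - 1 : ℝ[X]))
  have hN : ∀ p, N p = a * M ((X^2 - 1) * p) := fun p => by simp [N]
  have hoN : ∀ i k, N (P i * P k) = if i = k then 1 else 0 := fun i k => by rw [hN, hoP]
  have hcp := hlcP k
  have hc0 := hlc k
  have hc1 := hlc (k+1)
  have hc2 := hlc (k+2)
  -- inner products of S = (X^2-1) P_k with Q_j
  set S : ℝ[X] := (X^2 - 1) * P k with hS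
  have hSlt : ∀ j < k, M (S * Q j) = 0 := by
    intro j hj
    have h := ortho_lt N P hdP hlcP hoN k k le_rfl (Q j) (by rw [hd]; exact_mod_cast hj)
    rw [hN] at h
    have h' : S * Q j = (X^2 - 1) * (Q j * P k) := by rw [hS]; ring
    rw [h']
    rcases mul_eq_zero.1 h with h | h
    · exact absurd h ha.ne'
    · exact h
  have hSk : M (S * Q k) = (Q k).leadingCoeff / (P k).leadingCoeff / a := by
    have h := ortho_le N P hdP hlcP hoN k (Q k) (by rw [hd])
    rw [hN, hcn] at h
    have h' : S * Q k = (X^2 - 1) * (Q k * P k) := by rw [hS]; ring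
    rw [h', ← h]; field_simp
  have hSc : S.coeff (k+2) = (P k).leadingCoeff := by
    rw [hS, sub_mul, one_mul, coeff_sub, coeff_eq_zero_of_natDegree_lt (p := P k) (by rw [hndP]; omega),
      add_comm k 2, add_comm 2 k, coeff_X_pow_mul, hcnP, sub_zero]
  have hSd : S.degree < (k+3 : ℕ) := by
    rw [degree_lt_iff_coeff_zero]
    intro m hm
    obtain ⟨m, rfl⟩ := Nat.exists_eq_add_of_le' (show 2 ≤ m by omega)
    rw [hS, sub_mul, one_mul, coeff_sub, coeff_X_pow_mul, coeff_eq_zero_of_natDegree_lt (by rw [hndP]; omega),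
      coeff_eq_zero_of_natDegree_lt (by rw [hndP]; omega), sub_zero]
  have hSe : S.eval (-1) = 0 := by simp [hS]
  have hSk2 : M (S * Q (k+2)) = (P k).leadingCoeff / (Q (k+2)).leadingCoeff := by
    rw [ortho_le M Q hd hlc ho (k+2) S, hSc]
    rw [degree_lt_iff_coeff_zero] at hSd
    rw [degree_le_iff_coeff_zero]
    intro m hm
    have hm' : k + 2 < m := by exact_mod_cast hm
    exact hSd m (by omega)
  have s1 := ortho_eval_neg M hpos Q hd hlc ho k
  have s2 := ortho_eval_neg M hpos Q hd hlc ho (k+1)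
  -- third claim
  have third : a * (P k).leadingCoeff ^ 2 < (Q (k+1)).leadingCoeff ^ 2 := by
    set T : ℝ[X] := (X - 1) * P k with hT
    set α := (P k).leadingCoeff / (Q (k+1)).leadingCoeff with hα
    have hX1 : (X - 1 : ℝ[X]) ≠ 0 := by simpa using X_sub_C_ne_zero (1:ℝ)
    have hTQ : M (T * Q (k+1)) = α := by
      rw [ortho_le M Q hd hlc ho (k+1) T]
      · rw [hT, sub_mul, one_mul, coeff_sub, coeff_X_mul, hcnP,
          coeff_eq_zero_of_natDegree_lt (p := P k) (by rw [hndP]; omega), sub_zero]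
      · rw [hT, degree_mul, hdP]
        have : (X - 1 : ℝ[X]).degree = 1 := by simpa using degree_X_sub_C (1:ℝ)
        rw [this, add_comm]; push_cast; rfl
    have b1 : α ^ 2 ≤ M (T * T) := by
      have h : 0 ≤ M ((T - α • Q (k+1)) * (T - α • Q (k+1))) := by
        by_cases h0 : (T - α • Q (k+1)) = 0
        · simp [h0]
        · refine (hpos _ (mul_ne_zero h0 h0) ?_).le
          intro x _
          rw [eval_mul]; exact mul_self_nonneg _
      have h' : (T - α • Q (k+1)) * (T - α • Q (k+1))
          = T * T - (2 * α) • (T * Q (k+1)) + (α^2) • (Q (k+1) * Q (k+1)) := by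
        simp only [smul_eq_C_mul, map_mul, map_pow, map_ofNat]; ring
      rw [h', map_add, map_sub, map_smul, map_smul, hTQ, ho, if_pos rfl] at h
      simp only [smul_eq_mul] at h
      nlinarith
    have b2 : 0 < M ((X^2 - 1) * (P k * P k) - T * T) := by
      have e : (X^2 - 1) * (P k * P k) - T * T = C 2 * (X - 1) * P k * P k := by
        rw [hT, map_ofNat]; ring
      rw [e]
      apply hpos
      · exact mul_ne_zero (mul_ne_zero (mul_ne_zero (by simp) hX1) hP0) hP0
      · intro x hx
        simp only [eval_mul, eval_sub, eval_X, eval_C, eval_one]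
        rw [mul_assoc]
        exact mul_nonneg (by linarith) (mul_self_nonneg _)
    rw [map_sub] at b2
    have b3 := hoP k k
    rw [if_pos rfl] at b3
    have b4 : a * α ^ 2 < 1 := by rw [← b3]; exact mul_lt_mul_of_pos_left (by linarith) ha
    rw [hα, div_pow, ← mul_div_assoc, div_lt_one (by positivity)] at b4
    exact b4
  refine ⟨?_, ?_, third⟩
  · -- first claim
    have hB : M ((X^2 - 1) * (Q (k+1) * P k)) = M (S * Q (k+1)) := by
      rw [hS]; congr 1; ring
    rw [hB]
    set B := M (S * Q (k+1)) with hBdef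
    set A := M (S * Q (k+2)) with hA
    set G := M (S * Q k) with hG
    have hD : S - A • Q (k+2) - B • Q (k+1) - G • Q k = 0 := by
      apply ortho_zero M Q hd hlc ho (k+3)
      · have hq : ∀ (c : ℝ), ∀ j < k+3, (c • Q j).degree < (k+3 : ℕ) := fun c j hj =>
          lt_of_le_of_lt (degree_smul_le _ _) (by rw [hd]; exact_mod_cast hj)
        exact dsub_lt (dsub_lt (dsub_lt hSd
          (hq _ _ (by omega))) (hq _ _ (by omega))) (hq _ _ (by omega))
      · intro j hj
        simp only [sub_mul, map_sub, smul_mul_assoc, map_smul, ho, smul_eq_mul]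
        rcases lt_or_ge j k with h | h
        · rw [hSlt j h, if_neg (by omega), if_neg (by omega), if_neg (by omega)]; ring
        · have : j = k ∨ j = k+1 ∨ j = k+2 := by omega
          rcases this with rfl | rfl | rfl
          · simp [hG]
          · simp [hBdef]
          · simp [hA]
    have he := congrArg (eval (-1)) hD
    simp only [eval_sub, eval_smul, smul_eq_mul, hSe, eval_zero] at he
    have hA' : 0 < A := by rw [hSk2]; positivity
    have hG' : 0 < G := by rw [hSk]; positivity
    by_contra hneg
    push Not at hneg
    have k1 : B * (Q (k+1)).eval (-1) ^ 2
        = -(A * ((Q (k+1+1)).eval (-1) * (Q (k+1)).eval (-1)))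
          - G * ((Q (k+1)).eval (-1) * (Q k).eval (-1)) := by
      linear_combination (-(Q (k+1)).eval (-1)) * he
    nlinarith [mul_neg_of_pos_of_neg hA' s2, mul_neg_of_pos_of_neg hG' s1,
      mul_nonneg (neg_nonneg.2 hneg) (sq_nonneg ((Q (k+1)).eval (-1)))]
  · -- second claim
    set q := qtC P Q k with hq
    set A := (P k).leadingCoeff / (Q (k+1)).leadingCoeff with hA
    set G := (Q k).leadingCoeff / (P k).leadingCoeff / a
      - A * ((Q k).leadingCoeff / (Q (k+1)).leadingCoeff) with hG
    have hD : S - A • (X * Q (k+1)) - (A * q) • Q (k+1) - G • Q k = 0 := by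
      apply ortho_zero M Q hd hlc ho (k+1)
      · rw [degree_lt_iff_coeff_zero]
        intro m hm
        obtain ⟨m, rfl⟩ := Nat.exists_eq_add_of_le' (show 1 ≤ m by omega)
        simp only [coeff_sub, coeff_smul, coeff_X_mul, smul_eq_mul]
        rw [coeff_eq_zero_of_natDegree_lt (p := Q k) (by rw [hnd]; omega)]
        have : m = k ∨ m = k+1 ∨ k+2 ≤ m := by omega
        rcases this with rfl | rfl | h
        · rw [hS, rootSum_aux _ _ (hdP m), hcn, rootSum_aux2 _ _ (hd (m+1)), hq, qtC, hA]
          field_simp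
          ring
        · rw [hSc, hcn, coeff_eq_zero_of_natDegree_lt (by rw [hnd]; omega), hA]
          field_simp
          ring
        · rw [degree_lt_iff_coeff_zero] at hSd
          rw [hSd _ (by omega), coeff_eq_zero_of_natDegree_lt (n := m) (by rw [hnd]; omega),
            coeff_eq_zero_of_natDegree_lt (n := m+1) (by rw [hnd]; omega)]
          ring
      · intro j hj
        have e : X * Q (k+1) * Q j = (X * Q j) * Q (k+1) := by ring
        have hdX : (X * Q j).degree = ((j+1 : ℕ) : WithBot ℕ) := by
          rw [degree_mul, degree_X, hd, add_comm]; push_cast; rfl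
        simp only [sub_mul, map_sub, smul_mul_assoc, map_smul, ho, smul_eq_mul, e]
        rcases Nat.lt_or_ge j k with h | h
        · rw [hSlt j h, if_neg (by omega), if_neg (by omega),
            ortho_lt M Q hd hlc ho (k+1) (k+1) le_rfl _ (by rw [hdX]; exact_mod_cast (by omega))]
          ring
        · obtain rfl : j = k := by omega
          rw [hSk, ortho_le M Q hd hlc ho (j+1) _ hdX.le, coeff_X_mul, hcn, if_pos rfl,
            if_neg (by omega), hG]
          ring
    have he := congrArg (eval (-1)) hD
    simp only [eval_sub, eval_smul, smul_eq_mul, hSe, eval_zero, eval_mul, eval_X] at he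
    have hA' : 0 < A := by positivity
    have hG' : 0 < G := by
      have : G = (Q k).leadingCoeff * ((Q (k+1)).leadingCoeff ^ 2 - a * (P k).leadingCoeff ^ 2)
        / ((P k).leadingCoeff * a * (Q (k+1)).leadingCoeff ^ 2) := by
        rw [hG, hA]; field_simp
      rw [this]
      exact div_pos (mul_pos hc0 (by linarith)) (by positivity)
    by_contra hneg
    push Not at hneg
    have k1 : A * (q - 1) * (Q (k+1)).eval (-1) ^ 2
        = - G * ((Q (k+1)).eval (-1) * (Q k).eval (-1)) := by
      linear_combination (-(Q (k+1)).eval (-1)) * he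
    have k2 : A * (1 - q) * (Q (k+1)).eval (-1) ^ 2 ≥ 0 :=
      mul_nonneg (mul_nonneg hA'.le (by linarith)) (sq_nonneg _)
    nlinarith [mul_neg_of_pos_of_neg hG' s1]

lemma wgt_succ (l : ℕ) (hl : 1 ≤ l) (ζ x : ℝ) (hx : 1 < x) :
    wgt l ζ x = ((2 * (l : ℝ) - 1) / (2 * (l : ℝ) + 1)) * ((x^2 - 1) * wgt (l-1) ζ x) := by
  obtain ⟨m, rfl⟩ := Nat.exists_eq_add_of_le' hl
  have h : 0 < x^2 - 1 := by nlinarith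
  simp only [wgt, Nat.add_sub_cancel]
  push_cast
  have e : (m : ℝ) + 1 + 1/2 = ((m : ℝ) + 1/2) + 1 := by ring
  rw [e, Real.rpow_add_one h.ne']
  have h1 : (2 * ((m:ℝ) + 1) - 1) = 2 * m + 1 := by ring
  rw [h1]
  have h2 : (2 * (m:ℝ) + 1) ≠ 0 := by positivity
  have h3 : (2 * ((m:ℝ) + 1) + 1) ≠ 0 := by positivity
  by_cases hK : K2 ζ = 0
  · simp [hK]
  · field_simp

lemma wgt_int (l : ℕ) (ζ : ℝ) (hζ : 0 < ζ) (p : ℝ[X]) :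
    IntegrableOn (fun x => p.eval x * wgt l ζ x) (Set.Ioi 1) := by
  have hs : (0:ℝ) < (l : ℝ) + 1/2 := by positivity
  have hc : Continuous (wgt l ζ) := by
    unfold wgt
    refine Continuous.div_const (Continuous.mul (continuous_const.mul ?_) (by fun_prop)) _
    exact Continuous.rpow_const (by fun_prop) (fun _ => Or.inr hs.le)
  induction p using Polynomial.induction_on' with
  | add p q hp hq =>
    simp only [eval_add, add_mul]
    exact hp.add hq
  | monomial n c =>
    have h0 := integrableOn_rpow_mul_exp_neg_mul_rpow (p := 1) (s := n + 2 * ((l : ℝ) + 1/2)) (b := ζ)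
      (by have : (0:ℝ) ≤ n := by positivity
          linarith) zero_lt_one hζ
    have h1 := (h0.mono_set (Set.Ioi_subset_Ioi (zero_le_one (α := ℝ)))).const_mul
      (|c| * |ζ / ((2 * (l : ℝ) + 1) * K2 ζ)|)
    refine Integrable.mono' h1 ?_ ?_
    · exact (Continuous.mul (by fun_prop) hc).aestronglyMeasurable
    · refine (ae_restrict_iff' measurableSet_Ioi).2 (Filter.Eventually.of_forall ?_)
      intro x hx
      have hx1 : (1:ℝ) < x := hx
      have hx0 : 0 < x := by linarith
      have hy : 0 ≤ x^2 - 1 := by nlinarith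
      have hb : (x^2 - 1) ^ ((l : ℝ) + 1/2) ≤ x ^ (2 * ((l : ℝ) + 1/2)) := by
        rw [Real.rpow_mul hx0.le, Real.rpow_two]
        exact Real.rpow_le_rpow hy (by linarith) hs.le
      have e : (monomial n c).eval x * wgt l ζ x = c * (ζ / ((2 * (l : ℝ) + 1) * K2 ζ)) *
          (x ^ n * (x^2 - 1) ^ ((l : ℝ) + 1/2) * Real.exp (-ζ * x)) := by
        rw [eval_monomial, wgt]; ring
      rw [e, norm_mul, norm_mul, Real.norm_eq_abs, Real.norm_eq_abs, Real.norm_eq_abs,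
        Real.rpow_add hx0, Real.rpow_natCast, Real.rpow_one]
      have hr := Real.rpow_nonneg hy ((l : ℝ) + 1/2)
      rw [abs_of_nonneg (a := x ^ n * _ * _) (by positivity)]
      gcongr

/-- Integration against the weight. -/
noncomputable def Mfun (l : ℕ) (ζ : ℝ) (hζ : 0 < ζ) : ℝ[X] →ₗ[ℝ] ℝ where
  toFun p := ∫ x in Set.Ioi (1:ℝ), p.eval x * wgt l ζ x
  map_add' p q := by
    simp only [eval_add, add_mul]
    exact integral_add (wgt_int l ζ hζ p) (wgt_int l ζ hζ q)
  map_smul' c p := by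
    simp only [eval_smul, smul_eq_mul, mul_assoc, RingHom.id_apply]
    exact integral_const_mul _ _

lemma Mfun_pos (l : ℕ) (ζ : ℝ) (hζ : 0 < ζ) (hK : 0 < K2 ζ) (p : ℝ[X]) (hp : p ≠ 0)
    (h : ∀ x > 1, 0 ≤ p.eval x) : 0 < Mfun l ζ hζ p := by
  have hw : ∀ x : ℝ, 1 < x → 0 < wgt l ζ x := by
    intro x hx
    have hy : 0 < x^2 - 1 := by nlinarith
    have := Real.rpow_pos_of_pos hy ((l:ℝ) + 1/2)
    unfold wgt
    positivity
  change 0 < ∫ x in Set.Ioi (1:ℝ), p.eval x * wgt l ζ x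
  rw [setIntegral_pos_iff_support_of_nonneg_ae]
  · have hsub : Set.Ioi (1:ℝ) \ (p.roots.toFinset : Set ℝ) ⊆
        (Function.support fun x => p.eval x * wgt l ζ x) ∩ Set.Ioi 1 := by
      rintro x ⟨hx, hr⟩
      refine ⟨?_, hx⟩
      refine mul_ne_zero (fun h0 => hr ?_) (hw x hx).ne'
      simp [hp, h0]
    refine lt_of_lt_of_le ?_ (measure_mono hsub)
    rw [measure_sdiff_null (Finset.measure_zero _ _)]
    simp
  · refine (ae_restrict_iff' measurableSet_Ioi).2 (Filter.Eventually.of_forall ?_)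
    intro x hx
    exact mul_nonneg (h x hx) (hw x hx).le
  · exact wgt_int l ζ hζ p

theorem stmt13 (l : ℕ) (hl : 1 ≤ l) (ζ : ℝ) (hζ : 0 < ζ)
    (P Q : ℕ → Polynomial ℝ)
    (hP : IsOrthoFam l ζ P) (hQ : IsOrthoFam (l - 1) ζ Q) :
    (∀ k : ℕ, 0 < pC P Q k) ∧
    (∀ k : ℕ, 0 < qC l ζ P Q k) ∧
    (∀ k : ℕ, 1 ≤ k → 0 < rC l P Q k) ∧
    (∀ k : ℕ, 0 < ptC l P Q k) ∧
    (∀ k : ℕ, 0 < qtC P Q k) ∧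
    (∀ k : ℕ, 0 < rtC l P Q k) := by
  obtain ⟨hdP, hlcP, hoP⟩ := hP
  obtain ⟨hd, hlc, ho⟩ := hQ
  have hK : 0 < K2 ζ := by
    have h0 : 0 ≤ K2 ζ := by
      unfold K2
      exact integral_nonneg fun t => mul_nonneg (Real.cosh_pos _).le (Real.exp_pos _).le
    refine lt_of_le_of_ne h0 (fun h => ?_)
    have := ho 0 0
    simp [wgt, ← h] at this
  have hl' : (1:ℝ) ≤ l := by exact_mod_cast hl
  have hn : 0 < 2 * (l:ℝ) - 1 := by linarith
  have hm : 0 < 2 * (l:ℝ) + 1 := by linarith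
  set M := Mfun (l-1) ζ hζ with hM
  have hMl : ∀ p q : ℝ[X], (∫ x in Set.Ioi (1:ℝ), p.eval x * q.eval x * wgt l ζ x)
      = ((2 * (l : ℝ) - 1) / (2 * (l : ℝ) + 1)) * M ((X^2 - 1) * (p * q)) := by
    intro p q
    change _ = _ * ∫ x in Set.Ioi (1:ℝ), ((X^2 - 1) * (p * q)).eval x * wgt (l-1) ζ x
    rw [← integral_const_mul]
    refine setIntegral_congr_fun measurableSet_Ioi fun x hx => ?_
    simp only [wgt_succ l hl ζ x hx, eval_mul, eval_sub, eval_pow, eval_X, eval_one]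
    ring
  have ha : 0 < (2 * (l : ℝ) - 1) / (2 * (l : ℝ) + 1) := div_pos hn hm
  have main := abstract_main M (Mfun_pos (l-1) ζ hζ hK) P Q hd hlc
    (fun i k => by
      rw [← ho i k]
      change (∫ x in Set.Ioi (1:ℝ), (Q i * Q k).eval x * wgt (l-1) ζ x) = _
      simp only [eval_mul])
    _ ha hdP hlcP (fun i k => by rw [← hMl]; exact hoP i k)
  have hp : ∀ k, 0 < pC P Q k := fun k => div_pos (hlc k) (hlcP k)
  refine ⟨hp, fun k => ?_, fun k hk => ?_, fun k => ?_, fun k => (main k).2.1, fun k => ?_⟩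
  · rw [qC, hMl]
    exact mul_pos ha (main k).1
  · rw [rC, if_neg (by omega)]
    exact div_pos (mul_pos ha (hlcP _)) (hlc _)
  · exact div_pos (mul_pos ha (hlcP _)) (hlc _)
  · refine mul_pos (hp k) ?_
    have h := (main k).2.2
    have h1 := hlc (k+1)
    have e : ((2 * (l : ℝ) + 1) / (2 * (l : ℝ) - 1)) * (ptC l P Q k) ^ 2
      = ((2 * (l : ℝ) - 1) / (2 * (l : ℝ) + 1)) * (P k).leadingCoeff ^ 2
        / (Q (k+1)).leadingCoeff ^ 2 := by
      rw [ptC]; field_simp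
    rw [e, sub_pos, div_lt_one (by positivity)]
    exact h
end

section
/- Fix ℓ ∈ ℕ, k ≥ 1, and an open interval I ⊆ (0,∞). Suppose that for each ζ ∈ I, (P_j(·;ζ))_{j∈ℕ} is an orthonormal family for the weight ω^{(ℓ)}(·;ζ) and each coefficient of P_j(·;ζ) is differentiable in ζ on I. Let x : I → (1,∞) be a differentiable function such that P_k(x(ζ);ζ) = 0 for all ζ ∈ I. Then x′(ζ) < 0 for every ζ ∈ I; that is, every zero of P_k^{(ℓ)}(·;ζ) is a strictly decreasing function of the parameter ζ. -/
open MeasureTheory Polynomial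

/-- Unnormalized weight. -/
noncomputable def vw (l : ℕ) (ζ : ℝ) (y : ℝ) : ℝ :=
  (y ^ 2 - 1) ^ ((l : ℝ) + 1 / 2) * Real.exp (-ζ * y)

/-- Moment functional of the unnormalized weight. -/
noncomputable def Lf (l : ℕ) (ζ : ℝ) (p : Polynomial ℝ) : ℝ :=
  ∫ y in Set.Ioi (1 : ℝ), p.eval y * vw l ζ y

lemma vw_cont (l : ℕ) (ζ : ℝ) : Continuous (vw l ζ) := by
  unfold vw
  have h : (0 : ℝ) ≤ (l : ℝ) + 1 / 2 := by positivity
  exact ((by fun_prop : Continuous fun y : ℝ => y ^ 2 - 1).rpow_const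
    (fun _ => Or.inr h)).mul (by fun_prop)

lemma vw_pos (l : ℕ) (ζ : ℝ) {y : ℝ} (hy : 1 < y) : 0 < vw l ζ y := by
  unfold vw
  have : 0 < y ^ 2 - 1 := by nlinarith
  positivity

lemma vw_le (l : ℕ) (ζ : ℝ) {y : ℝ} (hy : 1 < y) :
    vw l ζ y ≤ y ^ (2 * l + 1) * Real.exp (-ζ * y) := by
  unfold vw
  have h1 : 0 ≤ y ^ 2 - 1 := by nlinarith
  gcongr
  calc (y ^ 2 - 1) ^ ((l : ℝ) + 1 / 2) ≤ (y ^ 2) ^ ((l : ℝ) + 1 / 2) := by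
        apply Real.rpow_le_rpow h1 (by linarith) (by positivity)
    _ = y ^ (2 * l + 1) := by
        rw [← Real.rpow_natCast y 2, ← Real.rpow_mul (by linarith), ← Real.rpow_natCast]
        congr 1
        push_cast
        ring

lemma integ_mono (l n : ℕ) {ζ : ℝ} (hζ : 0 < ζ) :
    IntegrableOn (fun y : ℝ => y ^ n * vw l ζ y) (Set.Ioi 1) := by
  have h0 : IntegrableOn (fun y : ℝ => y ^ ((n + (2 * l + 1) : ℕ) : ℝ) * Real.exp (-ζ * y))
      (Set.Ioi 1) := by
    have := integrableOn_rpow_mul_exp_neg_mul_rpow (s := ((n + (2 * l + 1) : ℕ) : ℝ)) (p := 1)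
      (b := ζ) (by have : (0 : ℝ) ≤ ((n + (2 * l + 1) : ℕ) : ℝ) := Nat.cast_nonneg _
                   linarith) one_pos hζ
    simp only [Real.rpow_one] at this
    exact this.mono_set (Set.Ioi_subset_Ioi zero_le_one)
  refine Integrable.mono' h0 ?_ ?_
  · exact ((continuous_pow n).mul (vw_cont l ζ)).aestronglyMeasurable
  · refine (ae_restrict_iff' measurableSet_Ioi).2 (Filter.Eventually.of_forall fun y hy => ?_)
    have hy : (1 : ℝ) < y := hy
    have hv := vw_pos l ζ hy
    have hy0 : 0 < y := by linarith
    rw [Real.norm_of_nonneg (by positivity), Real.rpow_natCast, pow_add, mul_assoc]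
    gcongr
    exact vw_le l ζ hy

lemma integ (l : ℕ) {ζ : ℝ} (hζ : 0 < ζ) (p : Polynomial ℝ) :
    IntegrableOn (fun y : ℝ => p.eval y * vw l ζ y) (Set.Ioi 1) := by
  induction p using Polynomial.induction_on' with
  | add p q hp hq =>
    simp only [eval_add, add_mul]
    exact hp.add hq
  | monomial n a =>
    simp only [eval_monomial, mul_assoc]
    exact (integ_mono l n hζ).const_mul a

lemma Lf_add (l : ℕ) {ζ : ℝ} (hζ : 0 < ζ) (p q : Polynomial ℝ) :
    Lf l ζ (p + q) = Lf l ζ p + Lf l ζ q := by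
  unfold Lf
  rw [← integral_add (integ l hζ p) (integ l hζ q)]
  simp only [eval_add, add_mul]

lemma Lf_C_mul (l : ℕ) (ζ : ℝ) (a : ℝ) (p : Polynomial ℝ) :
    Lf l ζ (C a * p) = a * Lf l ζ p := by
  unfold Lf
  rw [← integral_const_mul]
  simp only [eval_mul, eval_C, mul_assoc]

lemma Lf_sum (l : ℕ) {ζ : ℝ} (hζ : 0 < ζ) (n : ℕ) (f : ℕ → Polynomial ℝ) :
    Lf l ζ (∑ i ∈ Finset.range n, f i) = ∑ i ∈ Finset.range n, Lf l ζ (f i) := by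
  induction n with
  | zero => simp [Lf]
  | succ n ih => rw [Finset.sum_range_succ, Lf_add l hζ, ih, Finset.sum_range_succ]

lemma Lf_sq_pos (l : ℕ) {ζ : ℝ} (hζ : 0 < ζ) {p : Polynomial ℝ} (hp : p ≠ 0) :
    0 < Lf l ζ (p * p) := by
  unfold Lf
  rw [setIntegral_pos_iff_support_of_nonneg_ae _ (integ l hζ (p * p))]
  · have hsub : Set.Ioi (1 : ℝ) \ (p.roots.toFinset : Set ℝ) ⊆
        (Function.support fun y => (p * p).eval y * vw l ζ y) ∩ Set.Ioi 1 := by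
      rintro y ⟨hy, hr⟩
      refine ⟨?_, hy⟩
      have h1 : p.eval y ≠ 0 := by
        intro h
        apply hr
        simp [hp, h]
      have := vw_pos l ζ hy
      simp [h1, this.ne']
    refine lt_of_lt_of_le ?_ (measure_mono hsub)
    rw [measure_sdiff_null ((Finset.finite_toSet _).measure_zero _)]
    simp
  · refine (ae_restrict_iff' measurableSet_Ioi).2 (Filter.Eventually.of_forall fun y hy => ?_)
    have := vw_pos l ζ hy
    simp only [eval_mul, Pi.zero_apply]
    exact mul_nonneg (mul_self_nonneg _) this.le

lemma Lf_deriv (l : ℕ) {ζ₀ : ℝ} (hζ : 0 < ζ₀) (p : Polynomial ℝ) :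
    HasDerivAt (fun ζ => Lf l ζ p) (-Lf l ζ₀ (X * p)) ζ₀ := by
  have key := hasDerivAt_integral_of_dominated_loc_of_deriv_le
    (μ := volume.restrict (Set.Ioi (1 : ℝ))) (𝕜 := ℝ) (x₀ := ζ₀) (s := Set.Ioi (ζ₀ / 2))
    (F := fun ζ y => p.eval y * vw l ζ y)
    (F' := fun ζ y => -((X * p).eval y * vw l ζ y))
    (bound := fun y => ‖(X * p).eval y * vw l (ζ₀ / 2) y‖)
    (Ioi_mem_nhds (by linarith))
    (Filter.Eventually.of_forall fun ζ =>
      ((p.continuous).mul (vw_cont l ζ)).aestronglyMeasurable)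
    (integ l hζ p)
    (((X * p).continuous).mul (vw_cont l ζ₀)).neg.aestronglyMeasurable
    ?_ (integ l (by linarith) (X * p)).norm ?_
  · have := key.2
    rw [integral_neg] at this
    exact this
  · refine (ae_restrict_iff' measurableSet_Ioi).2 (Filter.Eventually.of_forall fun y hy => ?_)
    intro ζ hζ'
    have hy : (1 : ℝ) < y := hy
    have hζ' : ζ₀ / 2 < ζ := hζ'
    rw [norm_neg, norm_mul, norm_mul]
    refine mul_le_mul_of_nonneg_left ?_ (norm_nonneg _)
    rw [Real.norm_of_nonneg (vw_pos l _ hy).le, Real.norm_of_nonneg (vw_pos l _ hy).le]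
    unfold vw
    have h1 : 0 ≤ y ^ 2 - 1 := by nlinarith
    gcongr
  · refine Filter.Eventually.of_forall fun y ζ _ => ?_
    unfold vw
    have h1 : HasDerivAt (fun ζ : ℝ => Real.exp (-ζ * y)) (Real.exp (-ζ * y) * (-1 * y)) ζ :=
      (((hasDerivAt_id ζ).neg).mul_const y).exp
    have h2 := (h1.const_mul ((y ^ 2 - 1) ^ ((l : ℝ) + 1 / 2))).const_mul (p.eval y)
    refine h2.congr_deriv ?_
    simp only [eval_mul, eval_X]
    ring

lemma ortho_base {l : ℕ} {ζ : ℝ} {P : ℕ → Polynomial ℝ} (h : IsOrthoFam l ζ P)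
    {i k : ℕ} (hik : i ≠ k) : Lf l ζ (P i * P k) = 0 := by
  obtain ⟨-, -, h⟩ := h
  have hw : ∀ i k, (∫ x in Set.Ioi (1 : ℝ), (P i).eval x * (P k).eval x * wgt l ζ x)
      = ζ / ((2 * (l : ℝ) + 1) * K2 ζ) * Lf l ζ (P i * P k) := by
    intro i k
    unfold Lf
    rw [← integral_const_mul]
    congr 1
    ext y
    simp only [eval_mul, wgt, vw]
    ring
  have h0 := h 0 0
  have h1 := h i k
  rw [hw] at h0 h1
  rw [if_neg hik] at h1
  rw [if_pos rfl] at h0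
  rcases mul_eq_zero.1 h1 with h2 | h2
  · rw [h2] at h0; simp at h0
  · exact h2

lemma ortho {l : ℕ} {ζ : ℝ} (hζ : 0 < ζ) {P : ℕ → Polynomial ℝ} (h : IsOrthoFam l ζ P)
    {k : ℕ} : ∀ n : ℕ, n ≤ k → ∀ q : Polynomial ℝ, q.degree < n → Lf l ζ (q * P k) = 0 := by
  intro n
  induction n with
  | zero =>
    intro _ q hq
    have : q = 0 := by
      rw [← degree_eq_bot]
      simpa [Nat.WithBot.lt_zero_iff] using hq
    simp [this, Lf]
  | succ n ih =>
    intro hn q hq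
    have hd := h.1 n
    have hl := h.2.1 n
    have hlc : (P n).leadingCoeff = (P n).coeff n := by
      rw [leadingCoeff, natDegree_eq_of_degree_eq_some hd]
    rw [hlc] at hl
    set a := q.coeff n / (P n).coeff n with ha
    have hdeg : (q - C a * P n).degree < n := by
      rw [degree_lt_iff_coeff_zero]
      intro m hm
      rcases hm.eq_or_lt with rfl | hm
      · simp [ha, hl.ne']
      · have h1 : q.coeff m = 0 := coeff_eq_zero_of_degree_lt
          (lt_of_lt_of_le hq (by exact_mod_cast hm))
        have h2 : (P n).coeff m = 0 := coeff_eq_zero_of_degree_lt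
          (by rw [hd]; exact_mod_cast hm)
        simp [h1, h2]
    have e : q * P k = (q - C a * P n) * P k + C a * (P n * P k) := by ring
    rw [e, Lf_add l hζ, ih (by omega) _ hdeg, Lf_C_mul, ortho_base h (by omega)]
    simp

/-- Splitting off the value at a point. -/
lemma split_at (p : Polynomial ℝ) (x0 : ℝ) {k : ℕ} (hk : 1 ≤ k) (hp : p.natDegree ≤ k) :
    ∃ R : Polynomial ℝ, p = C (p.eval x0) + (X - C x0) * R ∧ R.degree < k := by
  refine ⟨p /ₘ (X - C x0), ?_, ?_⟩
  · have := modByMonic_add_div p (X - C x0)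
    rw [modByMonic_X_sub_C_eq_C_eval] at this
    exact this.symm
  · refine lt_of_le_of_lt degree_le_natDegree ?_
    rw [natDegree_divByMonic _ (monic_X_sub_C x0), natDegree_X_sub_C]
    exact_mod_cast (by omega)

theorem stmt15 (l k : ℕ) (hk : 1 ≤ k)
    (I : Set ℝ) (hIopen : IsOpen I) (hIsub : I ⊆ Set.Ioi (0 : ℝ))
    (P : ℝ → ℕ → Polynomial ℝ)
    (hP : ∀ ζ ∈ I, IsOrthoFam l ζ (P ζ))
    (hdiff : ∀ j n : ℕ, DifferentiableOn ℝ (fun ζ => (P ζ j).coeff n) I)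
    (x : ℝ → ℝ) (hx : DifferentiableOn ℝ x I)
    (hxgt : ∀ ζ ∈ I, 1 < x ζ)
    (hzero : ∀ ζ ∈ I, (P ζ k).eval (x ζ) = 0) :
    ∀ ζ ∈ I, deriv x ζ < 0 := by
  intro z hz
  have hz0 : 0 < z := hIsub hz
  have hnhds : I ∈ nhds z := hIopen.mem_nhds hz
  have hnd : ∀ ζ ∈ I, (P ζ k).natDegree = k := fun ζ hζ =>
    natDegree_eq_of_degree_eq_some ((hP ζ hζ).1 k)
  have hsum : ∀ ζ ∈ I, P ζ k = ∑ n ∈ Finset.range (k + 1), C ((P ζ k).coeff n) * X ^ n := by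
    intro ζ hζ
    conv_lhs => rw [as_sum_range_C_mul_X_pow (P ζ k), hnd ζ hζ]
  have hPne : P z k ≠ 0 := by
    intro h
    have := (hP z hz).1 k
    rw [h] at this
    simp at this
  have hxd : HasDerivAt x (deriv x z) z := (hx.differentiableAt hnhds).hasDerivAt
  have hc : ∀ n, HasDerivAt (fun ζ => (P ζ k).coeff n)
      (deriv (fun ζ => (P ζ k).coeff n) z) z := fun n =>
    ((hdiff k n).differentiableAt hnhds).hasDerivAt
  set c' : ℕ → ℝ := fun n => deriv (fun ζ => (P ζ k).coeff n) z with hc'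
  set D : Polynomial ℝ := ∑ n ∈ Finset.range (k + 1), C (c' n) * X ^ n with hD
  have hDdeg : D.natDegree ≤ k := by
    refine natDegree_sum_le_of_forall_le _ _ fun n hn => ?_
    refine (natDegree_C_mul_X_pow_le _ _).trans ?_
    have := Finset.mem_range.1 hn
    omega
  set x0 := x z with hx0
  obtain ⟨Q, hQ, hQdeg⟩ := split_at (P z k) x0 hk (hnd z hz).le
  rw [hzero z hz, C_0, zero_add] at hQ
  have hQne : Q ≠ 0 := by
    intro h
    rw [h, mul_zero] at hQ
    exact hPne hQ
  have horth : ∀ ζ ∈ I, ∀ q : Polynomial ℝ, q.degree < k → Lf l ζ (q * P ζ k) = 0 :=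
    fun ζ hζ q hq => ortho (hIsub hζ) (hP ζ hζ) k le_rfl q hq
  -- the derivative of the orthogonality relation
  have hf : HasDerivAt (fun ζ => ∑ n ∈ Finset.range (k + 1),
      (P ζ k).coeff n * Lf l ζ (X ^ n * Q))
      (∑ n ∈ Finset.range (k + 1), (c' n * Lf l z (X ^ n * Q)
        + (P z k).coeff n * (-Lf l z (X * (X ^ n * Q))))) z :=
    HasDerivAt.fun_sum fun n _ => (hc n).mul (Lf_deriv l hz0 (X ^ n * Q))
  have hf0 : (fun ζ => ∑ n ∈ Finset.range (k + 1),
      (P ζ k).coeff n * Lf l ζ (X ^ n * Q)) =ᶠ[nhds z] fun _ => 0 := by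
    filter_upwards [hnhds] with ζ hζ
    rw [← horth ζ hζ Q hQdeg]
    conv_rhs => rw [hsum ζ hζ, Finset.mul_sum, Lf_sum l (hIsub hζ)]
    refine Finset.sum_congr rfl fun n _ => ?_
    rw [← Lf_C_mul]
    congr 1
    ring
  have hder := hf.unique ((hasDerivAt_const z (0 : ℝ)).congr_of_eventuallyEq hf0)
  have e1 : ∑ n ∈ Finset.range (k + 1), c' n * Lf l z (X ^ n * Q) = Lf l z (D * Q) := by
    rw [hD, Finset.sum_mul, Lf_sum l hz0]
    refine Finset.sum_congr rfl fun n _ => ?_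
    rw [← Lf_C_mul, mul_assoc]
  have e2 : ∑ n ∈ Finset.range (k + 1), (P z k).coeff n * Lf l z (X * (X ^ n * Q))
      = Lf l z (X * P z k * Q) := by
    conv_rhs => rw [hsum z hz, Finset.mul_sum, Finset.sum_mul, Lf_sum l hz0]
    refine Finset.sum_congr rfl fun n _ => ?_
    rw [← Lf_C_mul]
    congr 1
    ring
  have e3 : Lf l z (D * Q) = Lf l z (X * P z k * Q) := by
    rw [← e1, ← e2, ← sub_eq_zero, ← hder, ← Finset.sum_sub_distrib]
    refine Finset.sum_congr rfl fun n _ => ?_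
    ring
  have e4 : Lf l z (X * P z k * Q) = Lf l z (P z k * P z k) := by
    have : X * P z k * Q = P z k * P z k + C x0 * (Q * P z k) := by
      nth_rewrite 3 [hQ]
      ring
    rw [this, Lf_add l hz0, Lf_C_mul, horth z hz Q hQdeg]
    simp
  have e5 : Lf l z (D * Q) = D.eval x0 * Lf l z Q := by
    obtain ⟨R, hR, hRdeg⟩ := split_at D x0 hk hDdeg
    have : D * Q = C (D.eval x0) * Q + R * P z k := by
      nth_rewrite 1 [hR]
      rw [hQ]
      ring
    rw [this, Lf_add l hz0, Lf_C_mul, horth z hz R hRdeg, add_zero]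
  have e6 : Lf l z (Q * Q) = Q.eval x0 * Lf l z Q := by
    have hQn : Q.natDegree ≤ k := natDegree_le_of_degree_le hQdeg.le
    obtain ⟨R, hR, hRdeg⟩ := split_at Q x0 hk hQn
    have : Q * Q = C (Q.eval x0) * Q + R * P z k := by
      nth_rewrite 1 [hR]
      rw [hQ]
      ring
    rw [this, Lf_add l hz0, Lf_C_mul, horth z hz R hRdeg, add_zero]
  have p1 : 0 < D.eval x0 * Lf l z Q := by
    rw [← e5, e3, e4]
    exact Lf_sq_pos l hz0 hPne
  have p2 : 0 < Q.eval x0 * Lf l z Q := by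
    rw [← e6]
    exact Lf_sq_pos l hz0 hQne
  -- the derivative of the zero relation
  have hg : HasDerivAt (fun ζ => ∑ n ∈ Finset.range (k + 1), (P ζ k).coeff n * x ζ ^ n)
      (∑ n ∈ Finset.range (k + 1), (c' n * x z ^ n
        + (P z k).coeff n * ((n : ℝ) * x z ^ (n - 1) * deriv x z))) z :=
    HasDerivAt.fun_sum fun n _ => (hc n).mul (hxd.fun_pow n)
  have hg0 : (fun ζ => ∑ n ∈ Finset.range (k + 1), (P ζ k).coeff n * x ζ ^ n)
      =ᶠ[nhds z] fun _ => 0 := by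
    filter_upwards [hnhds] with ζ hζ
    rw [← hzero ζ hζ, eval_eq_sum_range, hnd ζ hζ]
  have hgd := hg.unique ((hasDerivAt_const z (0 : ℝ)).congr_of_eventuallyEq hg0)
  have hDe : D.eval x0 = ∑ n ∈ Finset.range (k + 1), c' n * x z ^ n := by
    rw [hD, eval_finsetSum]
    simp [hx0]
  have hPd : (derivative (P z k)).eval x0 = ∑ n ∈ Finset.range (k + 1),
      (P z k).coeff n * ((n : ℝ) * x z ^ (n - 1)) := by
    conv_lhs => rw [hsum z hz]
    rw [derivative_sum, eval_finsetSum]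
    refine Finset.sum_congr rfl fun n _ => ?_
    simp [derivative_X_pow, hx0]
  have hPd2 : (derivative (P z k)).eval x0 = Q.eval x0 := by
    rw [hQ]
    simp
  have hrel : D.eval x0 + Q.eval x0 * deriv x z = 0 := by
    rw [← hPd2, hPd, hDe, Finset.sum_mul, ← Finset.sum_add_distrib, ← hgd]
    refine Finset.sum_congr rfl fun n _ => ?_
    ring
  by_contra hcon
  push Not at hcon
  have : 0 ≤ (Q.eval x0 * Lf l z Q) * deriv x z := mul_nonneg p2.le hcon
  have h3 : (Q.eval x0 * Lf l z Q) * deriv x z = -(D.eval x0 * Lf l z Q) := by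
    linear_combination (Lf l z Q) * hrel
  linarith
end
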